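/- Let b ∈ GL_n(E) be an invertible block upper-triangular matrix. Then dim_E(𝔭_{S_0} ∩ Ad_{b w_0}(𝔟)) = Σ_{a=1}^{s} r_a(r_a+1)/2 and dim_E((𝔷_{S_0} + 𝔫_{S_0}) ∩ Ad_{b w_0}(𝔟)) = s, where Ad_{b w_0}(𝔟) = Ad_b(𝔟̄). (These are the dimensions of Hom_{Fil,F_u}(D_σ, D_σ) = Ad_u(𝔭_{S_0,σ}) ∩ Ad_{g_σ}(𝔟_σ) and of Hom°_{Fil,F_u}(D_σ, D_σ) = Ad_u(τ_{S_0,σ}) ∩ Ad_{g_σ}(𝔟_σ) at a non-critical point; for the two-block composition (i, n−i) the second gives dim_E Hom^i_{Fil,F_u}(D_σ, D_σ) = 2.) -/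

import Mathlib

open Matrix

/-- The `E`-subspace of `n × n` matrices supported on the entries `(i, j)` where `P i j` holds. -/
def entrySub (E : Type*) [Field E] (n : ℕ) (P : Fin n → Fin n → Prop) :
    Submodule E (Matrix (Fin n) (Fin n) E) where
  carrier := {M | ∀ i j, ¬ P i j → M i j = 0}
  add_mem' := by
    intro M N hM hN i j hij
    simp only [Matrix.add_apply, hM i j hij, hN i j hij, add_zero]
  zero_mem' := by
    intro i j _
    simp
  smul_mem' := by
    intro c M hM i j hij
    simp only [Matrix.smul_apply, hM i j hij, smul_zero]

/-- The Borel subalgebra `𝔟` of upper-triangular matrices. -/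
def upperTri (E : Type*) [Field E] (n : ℕ) : Submodule E (Matrix (Fin n) (Fin n) E) :=
  entrySub E n fun i j => i ≤ j

/-- `𝔭_{S_0} = {M : M_{mk} = 0 whenever β(m) > β(k)}`, the standard block upper-triangular
(parabolic) subalgebra. -/
def parab (E : Type*) [Field E] {n s : ℕ} (β : Fin n → Fin s) :
    Submodule E (Matrix (Fin n) (Fin n) E) :=
  entrySub E n fun i j => β i ≤ β j

/-- `𝔫_{S_0} = {M : M_{mk} = 0 unless β(m) < β(k)}`, the nilpotent radical of `𝔭_{S_0}`. -/
def nilrad (E : Type*) [Field E] {n s : ℕ} (β : Fin n → Fin s) :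
    Submodule E (Matrix (Fin n) (Fin n) E) :=
  entrySub E n fun i j => β i < β j

/-- The linear map `(c : Fin s → E) ↦ diagonal (c ∘ β)`. -/
def blockDiagMap (E : Type*) [Field E] {n s : ℕ} (β : Fin n → Fin s) :
    (Fin s → E) →ₗ[E] Matrix (Fin n) (Fin n) E where
  toFun c := Matrix.diagonal fun m => c (β m)
  map_add' c c' := by
    ext i j
    by_cases h : i = j <;>
      simp [Matrix.diagonal_apply, Matrix.add_apply, h]
  map_smul' t c := by
    ext i j
    by_cases h : i = j <;>
      simp [Matrix.diagonal_apply, Matrix.smul_apply, h]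

/-- `𝔷_{S_0}`, the diagonal matrices whose diagonal entries are constant on each block. -/
def centerLevi (E : Type*) [Field E] {n s : ℕ} (β : Fin n → Fin s) :
    Submodule E (Matrix (Fin n) (Fin n) E) :=
  LinearMap.range (blockDiagMap E β)

/-- `Ad_g(W) = g W g⁻¹`. -/
noncomputable def adConj {E : Type*} [Field E] {n : ℕ} (g : Matrix (Fin n) (Fin n) E)
    (W : Submodule E (Matrix (Fin n) (Fin n) E)) : Submodule E (Matrix (Fin n) (Fin n) E) :=
  W.map ((LinearMap.mulLeft E g).comp (LinearMap.mulRight E g⁻¹))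

/-- The antidiagonal permutation matrix `w₀`, with `(w₀)_{m, n+1−m} = 1`. -/
def w0Mat (E : Type*) [Field E] (n : ℕ) : Matrix (Fin n) (Fin n) E :=
  Matrix.of fun i j => if j = i.rev then 1 else 0


section HelperLemmas

variable {E : Type*} [Field E] {n s : ℕ}

theorem mem_entrySub' {P : Fin n → Fin n → Prop} {M : Matrix (Fin n) (Fin n) E} :
    M ∈ entrySub E n P ↔ ∀ i j, ¬ P i j → M i j = 0 := Iff.rfl

theorem finrank_entrySub (P : Fin n → Fin n → Prop) [∀ i j, Decidable (P i j)] :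
    Module.finrank E (entrySub E n P)
      = (Finset.univ.filter fun p : Fin n × Fin n => P p.1 p.2).card := by
  let e : entrySub E n P ≃ₗ[E] ({p : Fin n × Fin n // P p.1 p.2} → E) :=
    { toFun := fun M p => M.1 p.1.1 p.1.2
      map_add' := fun _ _ => rfl
      map_smul' := fun _ _ => rfl
      invFun := fun f => ⟨Matrix.of fun i j => if h : P i j then f ⟨(i, j), h⟩ else 0, by
        intro i j h
        simp [h]⟩
      left_inv := by
        rintro ⟨M, hM⟩
        ext i j
        by_cases h : P i j
        · simp [h]
        · simp [h, hM i j h]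
      right_inv := by
        intro f
        ext ⟨p, hp⟩
        simp [hp] }
  rw [e.finrank_eq, Module.finrank_fintype_fun_eq_card, Fintype.card_subtype]

theorem card_le_pairs (S : Finset (Fin n)) :
    ((S ×ˢ S).filter fun p => p.2 ≤ p.1).card = S.card * (S.card + 1) / 2 := by
  have h1 : ((S ×ˢ S).filter fun p => p.1 ≤ p.2).card
      = ((S ×ˢ S).filter fun p => p.2 ≤ p.1).card := by
    apply Finset.card_bij (fun p _ => (p.2, p.1))
    · intro p hp; simp at hp ⊢; tauto
    · rintro ⟨a, b⟩ _ ⟨c, d⟩ _ h; simp at h ⊢; tauto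
    · rintro ⟨a, b⟩ h; exact ⟨(b, a), by simp at h ⊢; tauto, rfl⟩
  have h2 := Finset.card_union_add_card_inter ((S ×ˢ S).filter fun p => p.1 ≤ p.2)
    ((S ×ˢ S).filter fun p => p.2 ≤ p.1)
  have h3 : ((S ×ˢ S).filter fun p => p.1 ≤ p.2) ∪ ((S ×ˢ S).filter fun p => p.2 ≤ p.1)
      = S ×ˢ S := by
    rw [← Finset.filter_or]
    exact Finset.filter_true_of_mem fun p _ => le_total _ _
  have h4 : ((S ×ˢ S).filter fun p => p.1 ≤ p.2) ∩ ((S ×ˢ S).filter fun p => p.2 ≤ p.1)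
      = S.diag := by
    ext ⟨a, b⟩
    simp only [Finset.mem_inter, Finset.mem_filter, Finset.mem_product, Finset.mem_diag]
    constructor
    · rintro ⟨⟨⟨h, _⟩, h'⟩, _, h''⟩
      exact ⟨h, le_antisymm h' h''⟩
    · rintro ⟨h, rfl⟩
      simp [h]
  rw [h3, h4, h1, Finset.card_product, Finset.diag_card] at h2
  rw [mul_add, mul_one]
  omega

theorem card_blocks (β : Fin n → Fin s) :
    (Finset.univ.filter fun p : Fin n × Fin n => β p.1 = β p.2 ∧ p.2 ≤ p.1).card
      = ∑ a : Fin s, (Finset.univ.filter fun m : Fin n => β m = a).card *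
          ((Finset.univ.filter fun m : Fin n => β m = a).card + 1) / 2 := by
  rw [Finset.card_eq_sum_card_fiberwise (f := fun p => β p.1) (t := Finset.univ)
    (fun _ _ => by simp)]
  refine Finset.sum_congr rfl fun a _ => ?_
  rw [← card_le_pairs]
  congr 1
  ext ⟨i, j⟩
  simp only [Finset.mem_filter, Finset.mem_univ, true_and, Finset.mem_product]
  constructor
  · rintro ⟨⟨h, h'⟩, h''⟩
    exact ⟨⟨h'', h ▸ h''⟩, h'⟩
  · rintro ⟨⟨h, h'⟩, h''⟩
    exact ⟨⟨h.trans h'.symm, h''⟩, h⟩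

theorem mem_zn (β : Fin n → Fin s) (M : Matrix (Fin n) (Fin n) E) :
    M ∈ centerLevi E β ⊔ nilrad E β ↔
      ∃ c : Fin s → E, M - Matrix.diagonal (fun m => c (β m)) ∈ nilrad E β := by
  rw [Submodule.mem_sup]
  constructor
  · rintro ⟨_, ⟨c, rfl⟩, z, hz, rfl⟩
    refine ⟨c, ?_⟩
    have : blockDiagMap E β c = Matrix.diagonal (fun m => c (β m)) := rfl
    rw [this, add_sub_cancel_left]
    exact hz
  · rintro ⟨c, hc⟩
    exact ⟨_, ⟨c, rfl⟩, _, hc, add_sub_cancel _ _⟩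

theorem parab_mul {β : Fin n → Fin s} {M N : Matrix (Fin n) (Fin n) E}
    (hM : M ∈ parab E β) (hN : N ∈ parab E β) : M * N ∈ parab E β := by
  intro i j hij
  rw [Matrix.mul_apply]
  refine Finset.sum_eq_zero fun k _ => ?_
  by_cases h : β i ≤ β k
  · rw [hN k j (fun h' => hij (h.trans h')), mul_zero]
  · rw [hM i k h, zero_mul]

theorem parab_mul_nil {β : Fin n → Fin s} {M N : Matrix (Fin n) (Fin n) E}
    (hM : M ∈ parab E β) (hN : N ∈ nilrad E β) : M * N ∈ nilrad E β := by
  intro i j hij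
  rw [Matrix.mul_apply]
  refine Finset.sum_eq_zero fun k _ => ?_
  by_cases h : β i ≤ β k
  · rw [hN k j (fun h' => hij (h.trans_lt h')), mul_zero]
  · rw [hM i k h, zero_mul]

theorem nil_mul_parab {β : Fin n → Fin s} {M N : Matrix (Fin n) (Fin n) E}
    (hM : M ∈ nilrad E β) (hN : N ∈ parab E β) : M * N ∈ nilrad E β := by
  intro i j hij
  rw [Matrix.mul_apply]
  refine Finset.sum_eq_zero fun k _ => ?_
  by_cases h : β i < β k
  · rw [hN k j (fun h' => hij (h.trans_le h')), mul_zero]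
  · rw [hM i k h, zero_mul]

theorem comm_nil {β : Fin n → Fin s} {M : Matrix (Fin n) (Fin n) E}
    (hM : M ∈ parab E β) (c : Fin s → E) :
    M * Matrix.diagonal (fun m => c (β m)) - Matrix.diagonal (fun m => c (β m)) * M
      ∈ nilrad E β := by
  intro i j hij
  rw [Matrix.sub_apply, Matrix.mul_diagonal, Matrix.diagonal_mul]
  by_cases h : β i = β j
  · rw [h]; ring
  · rw [hM i j (fun h' => hij (lt_of_le_of_ne h' h))]; ring

theorem zn_conj {β : Fin n → Fin s} {g h M : Matrix (Fin n) (Fin n) E}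
    (hg : g ∈ parab E β) (hh : h ∈ parab E β) (hgh : g * h = 1)
    (hM : M ∈ centerLevi E β ⊔ nilrad E β) :
    g * M * h ∈ centerLevi E β ⊔ nilrad E β := by
  rw [mem_zn] at hM ⊢
  obtain ⟨c, hc⟩ := hM
  refine ⟨c, ?_⟩
  set D := Matrix.diagonal (fun m => c (β m)) with hD
  have key : g * M * h - D = g * (M - D) * h + (g * D - D * g) * h := by
    have : D = D * (g * h) := by rw [hgh, mul_one]
    calc g * M * h - D = g * M * h - D * (g * h) := by rw [← this]
      _ = _ := by noncomm_ring
  rw [key]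
  exact Submodule.add_mem _ (nil_mul_parab (parab_mul_nil hg hc) hh)
    (nil_mul_parab (comm_nil hg c) hh)

theorem w0_mul_self : w0Mat E n * w0Mat E n = 1 := by
  ext i j
  have : ∀ x : Fin n, (j = x.rev) = (x = j.rev) := by
    intro x
    apply propext
    constructor <;> rintro rfl <;> simp
  simp [Matrix.mul_apply, w0Mat, Matrix.one_apply, this, @eq_comm _ j i]

theorem w0_conj (M : Matrix (Fin n) (Fin n) E) (i j : Fin n) :
    (w0Mat E n * M * w0Mat E n) i j = M i.rev j.rev := by
  have : ∀ x : Fin n, (j = x.rev) = (x = j.rev) := by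
    intro x
    apply propext
    constructor <;> rintro rfl <;> simp
  simp [Matrix.mul_apply, w0Mat, this]

theorem adConj_eq (b : Matrix (Fin n) (Fin n) E) (hb : IsUnit b.det)
    (M : Matrix (Fin n) (Fin n) E) :
    M ∈ adConj (b * w0Mat E n) (upperTri E n) ↔
      b⁻¹ * M * b ∈ entrySub E n (fun i j => j ≤ i) := by
  have hw : (w0Mat E n)⁻¹ = w0Mat E n := Matrix.inv_eq_left_inv w0_mul_self
  have h1 := Matrix.mul_nonsing_inv b hb
  have h2 := Matrix.nonsing_inv_mul b hb
  unfold adConj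
  rw [Submodule.mem_map]
  simp only [LinearMap.comp_apply, LinearMap.mulLeft_apply, LinearMap.mulRight_apply,
    Matrix.mul_inv_rev, hw]
  constructor
  · rintro ⟨N, hN, rfl⟩
    have : b⁻¹ * (b * w0Mat E n * (N * (w0Mat E n * b⁻¹))) * b
        = w0Mat E n * N * w0Mat E n := by
      calc _ = (b⁻¹ * b) * (w0Mat E n * N * w0Mat E n) * (b⁻¹ * b) := by
            simp only [mul_assoc]
        _ = _ := by rw [h2, one_mul, mul_one]
    rw [this]
    intro i j hij
    rw [w0_conj]
    exact hN _ _ (fun hh => hij (Fin.rev_le_rev.1 hh))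
  · intro h
    refine ⟨w0Mat E n * (b⁻¹ * M * b) * w0Mat E n, ?_, ?_⟩
    · intro i j hij
      rw [w0_conj]
      exact h _ _ (fun hh => hij (Fin.rev_le_rev.1 hh))
    · calc _ = b * (w0Mat E n * w0Mat E n) * b⁻¹ * M * (b * (w0Mat E n * w0Mat E n) * b⁻¹) := by
            simp only [mul_assoc]
        _ = _ := by rw [w0_mul_self, mul_one, h1, one_mul, mul_one]

theorem finrank_conj (b : Matrix (Fin n) (Fin n) E) (hb : IsUnit b.det)
    (S : Submodule E (Matrix (Fin n) (Fin n) E))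
    (hS : ∀ M ∈ S, b * M * b⁻¹ ∈ S) (hS' : ∀ M ∈ S, b⁻¹ * M * b ∈ S) :
    Module.finrank E (S ⊓ adConj (b * w0Mat E n) (upperTri E n) :
        Submodule E (Matrix (Fin n) (Fin n) E))
      = Module.finrank E (S ⊓ entrySub E n (fun i j => j ≤ i) :
        Submodule E (Matrix (Fin n) (Fin n) E)) := by
  have h1 := Matrix.mul_nonsing_inv b hb
  have h2 := Matrix.nonsing_inv_mul b hb
  have c1 : ∀ M, b⁻¹ * (b * M * b⁻¹) * b = M := fun M => by
    calc _ = (b⁻¹ * b) * M * (b⁻¹ * b) := by simp only [mul_assoc]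
      _ = _ := by rw [h2, one_mul, mul_one]
  have c2 : ∀ M, b * (b⁻¹ * M * b) * b⁻¹ = M := fun M => by
    calc _ = (b * b⁻¹) * M * (b * b⁻¹) := by simp only [mul_assoc]
      _ = _ := by rw [h1, one_mul, mul_one]
  refine LinearEquiv.finrank_eq
    { toFun := fun M => ⟨b⁻¹ * M.1 * b, hS' _ M.2.1, (adConj_eq b hb _).1 M.2.2⟩
      invFun := fun M => ⟨b * M.1 * b⁻¹, hS _ M.2.1,
        (adConj_eq b hb _).2 (by rw [c1]; exact M.2.2)⟩
      map_add' := fun M N => Subtype.ext (by simp [mul_add, add_mul])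
      map_smul' := fun t M => Subtype.ext (by simp)
      left_inv := fun M => Subtype.ext (c2 _)
      right_inv := fun M => Subtype.ext (c1 _) }

end HelperLemmas

/-- Let `b ∈ GL_n(E)` be an invertible block upper-triangular matrix.  Then
`dim_E(𝔭_{S_0} ∩ Ad_{b w₀}(𝔟)) = Σ_{a=1}^{s} r_a(r_a+1)/2` and
`dim_E((𝔷_{S_0} + 𝔫_{S_0}) ∩ Ad_{b w₀}(𝔟)) = s`, where `r_a = |β⁻¹(a)|` is the size of the `a`-th
block. -/
theorem statement_10 (E : Type*) [Field E] (n s : ℕ) (hs : 1 ≤ s)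
    (β : Fin n → Fin s) (hβmono : Monotone β) (hβsurj : Function.Surjective β)
    (b : Matrix (Fin n) (Fin n) E) (hbunit : IsUnit b.det) (hbpar : b ∈ parab E β) :
    Module.finrank E (parab E β ⊓ adConj (b * w0Mat E n) (upperTri E n) :
        Submodule E (Matrix (Fin n) (Fin n) E))
      = ∑ a : Fin s, (Finset.univ.filter fun m : Fin n => β m = a).card *
          ((Finset.univ.filter fun m : Fin n => β m = a).card + 1) / 2 ∧
    Module.finrank E ((centerLevi E β ⊔ nilrad E β) ⊓ adConj (b * w0Mat E n) (upperTri E n) :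
        Submodule E (Matrix (Fin n) (Fin n) E))
      = s := by
  have hbinv : b⁻¹ ∈ parab E β := by
    have hB : Matrix.BlockTriangular b β := fun i j h => hbpar i j (not_le.2 h)
    haveI : Invertible b := Matrix.invertibleOfIsUnitDet b hbunit
    have := Matrix.blockTriangular_inv_of_blockTriangular hB
    exact fun i j h => this (not_le.1 h)
  constructor
  · rw [finrank_conj b hbunit _ (fun M hM => parab_mul (parab_mul hbpar hM) hbinv)
      (fun M hM => parab_mul (parab_mul hbinv hM) hbpar), ← card_blocks,
      ← finrank_entrySub (E := E) (fun i j => β i = β j ∧ j ≤ i)]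
    congr 2
    all_goals
      have : parab E β ⊓ entrySub E n (fun i j => j ≤ i)
        = entrySub E n (fun i j => β i = β j ∧ j ≤ i) := by
        ext M
        rw [Submodule.mem_inf]
        constructor
        · rintro ⟨h, h'⟩ i j hij
          by_cases hji : j ≤ i
          · exact h i j fun hh => hij ⟨le_antisymm hh (hβmono hji), hji⟩
          · exact h' i j hji
        · intro h
          exact ⟨fun i j hij => h i j fun hh => hij hh.1.le, fun i j hij => h i j fun hh => hij hh.2⟩
      rw [this]
  · rw [finrank_conj b hbunit _
      (fun M hM => zn_conj hbpar hbinv (Matrix.mul_nonsing_inv b hbunit) hM)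
      (fun M hM => zn_conj hbinv hbpar (Matrix.nonsing_inv_mul b hbunit) hM)]
    have : (centerLevi E β ⊔ nilrad E β) ⊓ entrySub E n (fun i j => j ≤ i)
        = LinearMap.range (blockDiagMap E β) := by
      ext M
      rw [Submodule.mem_inf, mem_zn]
      constructor
      · rintro ⟨⟨c, hc⟩, h⟩
        refine ⟨c, ?_⟩
        ext i j
        change Matrix.diagonal (fun m => c (β m)) i j = M i j
        by_cases hij : β i < β j
        · have hlt : ¬ j ≤ i := fun h' => absurd (hβmono h') (not_le.2 hij)
          rw [h i j hlt, Matrix.diagonal_apply_ne]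
          rintro rfl
          exact hlt le_rfl
        · exact (sub_eq_zero.1 (hc i j hij)).symm
      · rintro ⟨c, rfl⟩
        have hD : blockDiagMap E β c = Matrix.diagonal (fun m => c (β m)) := rfl
        rw [hD]
        refine ⟨⟨c, by rw [sub_self]; exact Submodule.zero_mem _⟩, fun i j hij => ?_⟩
        rw [Matrix.diagonal_apply_ne]
        rintro rfl
        exact hij le_rfl
    rw [this, LinearMap.finrank_range_of_inj, Module.finrank_fin_fun]
    intro c c' h
    have h' := Matrix.diagonal_injective (show Matrix.diagonal (fun m => c (β m))
      = Matrix.diagonal (fun m => c' (β m)) from h)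
    ext a
    obtain ⟨m, rfl⟩ := hβsurj a
    exact congrFun h' m
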